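/- Corollary 2.3 (Coarse score accuracy recovers support-improving edits). Fix x ∈ X and define the true limiting normalized scores S_q(h,a;σ) := q_σ(x^{h→a})/q_σ(x) for σ ∈ (0,1), h ∈ {1,…,H}, and tokens a ≠ x^h. Let S_p(h,a;σ) be any family of strictly positive real numbers (the learned scores), and define the distortion C_σ(x) := max_{h} max_{a ≠ x^h} max( S_p(h,a;σ)/S_q(h,a;σ), S_q(h,a;σ)/S_p(h,a;σ) ). If σ^{1/2}·C_σ(x) → 0 as σ → 0⁺, then there exists σ₀ ∈ (0,1) such that for all σ ∈ (0,σ₀), all h, and all a ≠ x^h: S_p(h,a;σ) > σ^{−1/2} if and only if d(x^{h→a},D) < d(x,D). In other words, thresholding the learned normalized scores at σ^{−1/2} exactly recovers the support-improving single-token edits. -/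

import Mathlib

open Filter

/-- Uniform-corrupted marginal `q_σ(x)`. -/
noncomputable def qUnif (K H : ℕ) (p : (Fin H → Fin K) → ℝ) (σ : ℝ)
    (x : Fin H → Fin K) : ℝ :=
  ∑ x0 : Fin H → Fin K, p x0 *
    ∏ i : Fin H, ((1 - σ) * (if x i = x0 i then (1 : ℝ) else 0) + σ / K)

/-- Hamming distance from `x` to the support `D = {z : p z ≠ 0}` of `p`. -/
noncomputable def distSupp (K H : ℕ) (p : (Fin H → Fin K) → ℝ)
    (x : Fin H → Fin K) : ℕ :=
  sInf {n : ℕ | ∃ z : Fin H → Fin K, p z ≠ 0 ∧ hammingDist x z = n}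

/-- True limiting normalized score `S_q(h,a;σ) = q_σ(x^{h→a})/q_σ(x)`. -/
noncomputable def trueScore (K H : ℕ) (p : (Fin H → Fin K) → ℝ)
    (x : Fin H → Fin K) (h : Fin H) (a : Fin K) (σ : ℝ) : ℝ :=
  qUnif K H p σ (Function.update x h a) / qUnif K H p σ x

/-! The corrupted marginal satisfies `q_σ(x) = Θ(σ ^ d(x, D))` as `σ → 0⁺`: a clean string at
Hamming distance `n` from `x` contributes a term of order `σ ^ n`, and the nearest ones dominate.
Hence the score `q_σ(y) / q_σ(x)` is bounded when `d(x, D) ≤ d(y, D)` and at least of order `σ⁻¹`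
otherwise. A distortion factor `C` moves these two regimes to `O(C)` and to at least order
`σ⁻¹ / C`, so every threshold `τ` with `C ≪ τ ≪ σ⁻¹ / C` separates them; `τ = σ ^ (-1 / 2)` is the
balanced choice. -/

open Asymptotics
open scoped Topology

section HammingDistance

variable {ι : Type*} [Fintype ι] {α : ι → Type*} [∀ i, DecidableEq (α i)]

lemma prod_ite_eq_pow_hammingDist {M : Type*} [CommMonoid M] (c : M) (x y : ∀ i, α i) :
    ∏ i, (if x i = y i then 1 else c) = c ^ hammingDist x y := by
  simp only [Finset.prod_ite, Finset.prod_const_one, Finset.prod_const, one_mul, hammingDist, ne_eq]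

/-- Hamming distance from the string `x` to the set `D` of strings; it takes the junk value `0` when
`D` is empty. -/
noncomputable def hammingInfDist (x : ∀ i, α i) (D : Set (∀ i, α i)) : ℕ :=
  sInf (hammingDist x '' D)

lemma hammingInfDist_le_hammingDist {D : Set (∀ i, α i)} (x : ∀ i, α i) {z : ∀ i, α i}
    (hz : z ∈ D) : hammingInfDist x D ≤ hammingDist x z :=
  Nat.sInf_le (Set.mem_image_of_mem _ hz)

lemma exists_hammingDist_eq_hammingInfDist {D : Set (∀ i, α i)} (hD : D.Nonempty)
    (x : ∀ i, α i) : ∃ z ∈ D, hammingDist x z = hammingInfDist x D :=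
  Nat.sInf_mem (hD.image (hammingDist x))

end HammingDistance

section UniformKernel

variable {ι : Type*} [Fintype ι] {α : ι → Type*} [∀ i, Fintype (α i)]

lemma prod_card_inv_pos (x : ∀ i, α i) : 0 < ∏ i, (Fintype.card (α i) : ℝ)⁻¹ :=
  Finset.prod_pos fun i _ => inv_pos.2 (Nat.cast_pos.2 (Fintype.card_pos_iff.2 ⟨x i⟩))

variable [∀ i, DecidableEq (α i)]

/-- Transition probability from the clean string `z` to the string `x` under uniform corruption at
noise level `σ`: independently at each position, the token is resampled uniformly from its alphabet
with probability `σ`. Alphabets may vary with the position. -/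
noncomputable def uniformKernel (σ : ℝ) (x z : ∀ i, α i) : ℝ :=
  ∏ i, ((1 - σ) * (if x i = z i then 1 else 0) + σ / Fintype.card (α i))

lemma uniformKernel_nonneg {σ : ℝ} (hσ : σ ∈ Set.Icc (0 : ℝ) 1) (x z : ∀ i, α i) :
    0 ≤ uniformKernel σ x z := by
  have hσ' : 0 ≤ 1 - σ := sub_nonneg.2 hσ.2
  have := hσ.1
  exact Finset.prod_nonneg fun i _ => by positivity

lemma uniformKernel_le_pow_hammingDist {σ : ℝ} (hσ : σ ∈ Set.Icc (0 : ℝ) 1) (x z : ∀ i, α i) :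
    uniformKernel σ x z ≤ σ ^ hammingDist x z := by
  have hσ' : 0 ≤ 1 - σ := sub_nonneg.2 hσ.2
  have hσ0 := hσ.1
  rw [← prod_ite_eq_pow_hammingDist]
  refine Finset.prod_le_prod (fun i _ => by positivity) fun i _ => ?_
  have : Nonempty (α i) := ⟨x i⟩
  have hcard : σ / Fintype.card (α i) ≤ σ :=
    div_le_self hσ0 (Nat.one_le_cast.2 Fintype.card_pos)
  split_ifs <;> linarith

lemma le_uniformKernel {σ : ℝ} (hσ : σ ∈ Set.Icc (0 : ℝ) 1) (x z : ∀ i, α i) :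
    (∏ i, (Fintype.card (α i) : ℝ)⁻¹) * σ ^ hammingDist x z ≤ uniformKernel σ x z := by
  have hσ0 := hσ.1
  rw [← prod_ite_eq_pow_hammingDist, ← Finset.prod_mul_distrib]
  refine Finset.prod_le_prod (fun i _ => by positivity) fun i _ => ?_
  have hcard : (Fintype.card (α i) : ℝ)⁻¹ ≤ 1 := Nat.cast_inv_le_one _
  rw [div_eq_mul_inv]
  split_ifs
  · nlinarith [mul_nonneg (sub_nonneg.2 hσ.2) (sub_nonneg.2 hcard)]
  · linarith

end UniformKernel

section UniformMarginal

variable {ι : Type*} [Fintype ι] [DecidableEq ι] {α : ι → Type*} [∀ i, DecidableEq (α i)]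
  [∀ i, Fintype (α i)] {p : (∀ i, α i) → ℝ}

/-- Marginal weight `q_σ(x)` of the string `x` when clean strings weighted by `p` undergo uniform
corruption at noise level `σ`. -/
noncomputable def uniformMarginal (p : (∀ i, α i) → ℝ) (σ : ℝ) (x : ∀ i, α i) : ℝ :=
  ∑ z, p z * uniformKernel σ x z

lemma uniformMarginal_le (hp : ∀ z, 0 ≤ p z) {σ : ℝ} (hσ : σ ∈ Set.Icc (0 : ℝ) 1)
    (x : ∀ i, α i) :
    uniformMarginal p σ x ≤ (∑ z, p z) * σ ^ hammingInfDist x (Function.support p) := by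
  rw [Finset.sum_mul]
  refine Finset.sum_le_sum fun z _ => ?_
  rcases eq_or_ne (p z) 0 with hz | hz
  · simp only [hz, zero_mul, le_refl]
  · exact mul_le_mul_of_nonneg_left ((uniformKernel_le_pow_hammingDist hσ x z).trans
      (pow_le_pow_of_le_one hσ.1 hσ.2 (hammingInfDist_le_hammingDist x hz))) (hp z)

lemma le_uniformMarginal (hp : ∀ z, 0 ≤ p z) {σ : ℝ} (hσ : σ ∈ Set.Icc (0 : ℝ) 1)
    (x z : ∀ i, α i) :
    p z * (∏ i, (Fintype.card (α i) : ℝ)⁻¹) * σ ^ hammingDist x z ≤ uniformMarginal p σ x :=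
  calc p z * (∏ i, (Fintype.card (α i) : ℝ)⁻¹) * σ ^ hammingDist x z
      ≤ p z * uniformKernel σ x z := by
        rw [mul_assoc]
        exact mul_le_mul_of_nonneg_left (le_uniformKernel hσ x z) (hp z)
    _ ≤ uniformMarginal p σ x :=
        Finset.single_le_sum (f := fun z => p z * uniformKernel σ x z)
          (fun w _ => mul_nonneg (hp w) (uniformKernel_nonneg hσ x w)) (Finset.mem_univ z)

lemma uniformMarginal_pos (hp : ∀ z, 0 ≤ p z) (hD : (Function.support p).Nonempty) {σ : ℝ}
    (hσ : σ ∈ Set.Ioc (0 : ℝ) 1) (x : ∀ i, α i) : 0 < uniformMarginal p σ x := by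
  obtain ⟨z, hz⟩ := hD
  have hpz : 0 < p z := (hp z).lt_of_ne' hz
  have hσ0 := hσ.1
  have hcard := prod_card_inv_pos x
  exact lt_of_lt_of_le (by positivity) (le_uniformMarginal hp (Set.Ioc_subset_Icc_self hσ) x z)

lemma uniformMarginal_isTheta (hp : ∀ z, 0 ≤ p z) (hD : (Function.support p).Nonempty)
    (x : ∀ i, α i) :
    (fun σ => uniformMarginal p σ x) =Θ[𝓝[>] 0]
      fun σ : ℝ => σ ^ hammingInfDist x (Function.support p) := by
  constructor
  · refine IsBigO.of_bound (∑ z, p z) ?_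
    filter_upwards [Ioc_mem_nhdsGT one_pos] with σ hσ
    rw [Real.norm_of_nonneg (uniformMarginal_pos hp hD hσ x).le,
      Real.norm_of_nonneg (pow_nonneg hσ.1.le _)]
    exact uniformMarginal_le hp (Set.Ioc_subset_Icc_self hσ) x
  · obtain ⟨z, hz, hxz⟩ := exists_hammingDist_eq_hammingInfDist hD x
    have hpz : 0 < p z := (hp z).lt_of_ne' hz
    have hcard := prod_card_inv_pos x
    refine IsBigO.of_bound (p z * ∏ i, (Fintype.card (α i) : ℝ)⁻¹)⁻¹ ?_
    filter_upwards [Ioc_mem_nhdsGT one_pos] with σ hσ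
    rw [Real.norm_of_nonneg (uniformMarginal_pos hp hD hσ x).le,
      Real.norm_of_nonneg (pow_nonneg hσ.1.le _), le_inv_mul_iff₀ (mul_pos hpz hcard), ← hxz]
    exact le_uniformMarginal hp (Set.Ioc_subset_Icc_self hσ) x z

/-- Normalized score `q_σ(y) / q_σ(x)` of the move from `x` to an arbitrary string `y`. -/
noncomputable def uniformScore (p : (∀ i, α i) → ℝ) (x y : ∀ i, α i) (σ : ℝ) : ℝ :=
  uniformMarginal p σ y / uniformMarginal p σ x

lemma uniformScore_pos (hp : ∀ z, 0 ≤ p z) (hD : (Function.support p).Nonempty) {σ : ℝ}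
    (hσ : σ ∈ Set.Ioc (0 : ℝ) 1) (x y : ∀ i, α i) : 0 < uniformScore p x y σ :=
  div_pos (uniformMarginal_pos hp hD hσ y) (uniformMarginal_pos hp hD hσ x)

lemma uniformScore_isTheta (hp : ∀ z, 0 ≤ p z) (hD : (Function.support p).Nonempty)
    (x y : ∀ i, α i) :
    uniformScore p x y =Θ[𝓝[>] 0] fun σ : ℝ =>
      σ ^ hammingInfDist y (Function.support p) / σ ^ hammingInfDist x (Function.support p) :=
  (uniformMarginal_isTheta hp hD y).div (uniformMarginal_isTheta hp hD x)

lemma uniformScore_isBigO_one (hp : ∀ z, 0 ≤ p z) (hD : (Function.support p).Nonempty)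
    {x y : ∀ i, α i}
    (hxy : hammingInfDist x (Function.support p) ≤ hammingInfDist y (Function.support p)) :
    uniformScore p x y =O[𝓝[>] 0] fun _ => (1 : ℝ) := by
  refine (uniformScore_isTheta hp hD x y).isBigO.trans (IsBigO.of_bound 1 ?_)
  filter_upwards [Ioc_mem_nhdsGT one_pos] with σ hσ
  have hσ0 := hσ.1
  rw [Real.norm_of_nonneg (by positivity), norm_one, one_mul, div_le_one (by positivity)]
  exact pow_le_pow_of_le_one hσ0.le hσ.2 hxy

lemma inv_isBigO_uniformScore (hp : ∀ z, 0 ≤ p z) (hD : (Function.support p).Nonempty)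
    {x y : ∀ i, α i}
    (hyx : hammingInfDist y (Function.support p) < hammingInfDist x (Function.support p)) :
    (fun σ : ℝ => σ⁻¹) =O[𝓝[>] 0] uniformScore p x y := by
  refine IsBigO.trans (IsBigO.of_bound 1 ?_) (uniformScore_isTheta hp hD x y).symm.isBigO
  filter_upwards [Ioc_mem_nhdsGT one_pos] with σ hσ
  have hσ0 := hσ.1
  rw [Real.norm_of_nonneg (by positivity), Real.norm_of_nonneg (by positivity), one_mul,
    le_div_iff₀ (by positivity), inv_mul_le_iff₀ hσ0, ← pow_succ']
  exact pow_le_pow_of_le_one hσ0.le hσ.2 hyx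

end UniformMarginal

section Threshold

variable {β : Type*} {l : Filter β} {S Q C τ : β → ℝ}

lemma eventually_le_threshold (hS : ∀ᶠ b in l, 0 < S b) (hQ : ∀ᶠ b in l, 0 < Q b)
    (hSQ : ∀ᶠ b in l, S b / Q b ≤ C b) (hQ_bdd : Q =O[l] fun _ => (1 : ℝ)) (hCτ : C =o[l] τ)
    (hτ : ∀ᶠ b in l, 0 ≤ τ b) : ∀ᶠ b in l, S b ≤ τ b := by
  have hS_le : S =O[l] fun b => C b * Q b := by
    refine IsBigO.of_norm_eventuallyLE ?_
    filter_upwards [hS, hQ, hSQ] with b hSb hQb hSQb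
    rw [Real.norm_of_nonneg hSb.le]
    exact (div_le_iff₀ hQb).1 hSQb
  have hSτ : S =o[l] τ :=
    hS_le.trans_isLittleO (by simpa only [mul_one] using hCτ.mul_isBigO hQ_bdd)
  filter_upwards [hSτ.eventuallyLE, hτ] with b hb hτb
  exact (le_abs_self _).trans (hb.trans_eq (Real.norm_of_nonneg hτb))

lemma eventually_threshold_lt {g : β → ℝ} (hS : ∀ᶠ b in l, 0 < S b) (hQ : ∀ᶠ b in l, 0 < Q b)
    (hQS : ∀ᶠ b in l, Q b / S b ≤ C b) (hgQ : g =O[l] Q)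
    (hCτ : (fun b => C b * τ b) =o[l] g) : ∀ᶠ b in l, τ b < S b := by
  have hQ_le : Q =O[l] fun b => C b * S b := by
    refine IsBigO.of_norm_eventuallyLE ?_
    filter_upwards [hS, hQ, hQS] with b hSb hQb hQSb
    rw [Real.norm_of_nonneg hQb.le]
    exact (div_le_iff₀ hSb).1 hQSb
  have hCτS : (fun b => C b * τ b) =o[l] fun b => C b * S b :=
    hCτ.trans_isBigO (hgQ.trans hQ_le)
  filter_upwards [hCτS.def one_half_pos, hS, hQ, hQS] with b hb hSb hQb hQSb
  have hCb : 0 < C b := (div_pos hQb hSb).trans_le hQSb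
  have hlt : C b * τ b < C b * S b := by
    have hCS := mul_pos hCb hSb
    rw [Real.norm_of_nonneg hCS.le] at hb
    linarith [Real.le_norm_self (C b * τ b)]
  exact lt_of_mul_lt_mul_left hlt hCb.le

end Threshold

lemma isLittleO_rpow_neg_of_tendsto {C : ℝ → ℝ} {r : ℝ}
    (hC : Tendsto (fun σ => σ ^ r * C σ) (𝓝[>] 0) (𝓝 0)) :
    C =o[𝓝[>] 0] fun σ => σ ^ (-r) := by
  have hpos : ∀ᶠ σ : ℝ in 𝓝[>] 0, 0 < σ := self_mem_nhdsWithin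
  refine (isLittleO_iff_tendsto' ?_).2 (hC.congr' ?_)
  · filter_upwards [hpos] with σ hσ hzero
    exact absurd hzero (Real.rpow_pos_of_pos hσ _).ne'
  · filter_upwards [hpos] with σ hσ
    rw [Real.rpow_neg hσ.le, div_inv_eq_mul, mul_comm]

lemma isLittleO_mul_rpow {C : ℝ → ℝ} {r : ℝ} (hC : C =o[𝓝[>] 0] fun σ => σ ^ r) (s : ℝ) :
    (fun σ => C σ * σ ^ s) =o[𝓝[>] 0] fun σ => σ ^ (r + s) := by
  refine (hC.mul_isBigO (isBigO_refl _ _)).congr' .rfl ?_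
  filter_upwards [self_mem_nhdsWithin] with σ hσ
  rw [Real.rpow_add hσ]

lemma exists_Ioo_zero_one_of_eventually_nhdsGT {P : ℝ → Prop} (hP : ∀ᶠ σ in 𝓝[>] 0, P σ) :
    ∃ σ₀ ∈ Set.Ioo (0 : ℝ) 1, ∀ σ ∈ Set.Ioo 0 σ₀, P σ := by
  obtain ⟨σ₀, hσ₀, hsub⟩ := (mem_nhdsGT_iff_exists_mem_Ioc_Ioo_subset (one_half_pos (α := ℝ))).1 hP
  exact ⟨σ₀, ⟨hσ₀.1, hσ₀.2.trans_lt one_half_lt_one⟩, hsub⟩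

theorem coarse_score_projection_general {ι : Type*} [Fintype ι] [DecidableEq ι] {α : ι → Type*}
    [∀ i, DecidableEq (α i)] [∀ i, Fintype (α i)] {p : (∀ i, α i) → ℝ} (hp : ∀ z, 0 ≤ p z)
    (hD : (Function.support p).Nonempty) (x : ∀ i, α i) {κ : Type*} [Finite κ]
    (y : κ → ∀ i, α i) {S : κ → ℝ → ℝ} {C τ : ℝ → ℝ} (hS : ∀ k, ∀ᶠ σ in 𝓝[>] 0, 0 < S k σ)
    (hC : ∀ k, ∀ᶠ σ in 𝓝[>] 0,
      max (S k σ / uniformScore p x (y k) σ) (uniformScore p x (y k) σ / S k σ) ≤ C σ)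
    (hτ : ∀ᶠ σ in 𝓝[>] 0, 0 ≤ τ σ) (hCτ : C =o[𝓝[>] 0] τ)
    (hCτ_inv : (fun σ => C σ * τ σ) =o[𝓝[>] 0] fun σ => σ⁻¹) :
    ∀ᶠ σ in 𝓝[>] 0, ∀ k, τ σ < S k σ ↔
      hammingInfDist (y k) (Function.support p) < hammingInfDist x (Function.support p) := by
  refine eventually_all.2 fun k => ?_
  have hQ : ∀ᶠ σ in 𝓝[>] 0, 0 < uniformScore p x (y k) σ := by
    filter_upwards [Ioc_mem_nhdsGT one_pos] with σ hσ using uniformScore_pos hp hD hσ x (y k)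
  rcases le_or_gt (hammingInfDist x (Function.support p))
    (hammingInfDist (y k) (Function.support p)) with hle | hlt
  · have hSQ := (hC k).mono fun σ hσ => (le_max_left _ _).trans hσ
    filter_upwards [eventually_le_threshold (hS k) hQ hSQ (uniformScore_isBigO_one hp hD hle)
      hCτ hτ] with σ hσ
    exact iff_of_false hσ.not_gt hle.not_gt
  · have hQS := (hC k).mono fun σ hσ => (le_max_right _ _).trans hσ
    filter_upwards [eventually_threshold_lt (hS k) hQ hQS (inv_isBigO_uniformScore hp hD hlt)
      hCτ_inv] with σ hσ
    exact iff_of_true hσ hlt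

lemma distSupp_eq_hammingInfDist {K H : ℕ} (p : (Fin H → Fin K) → ℝ) (x : Fin H → Fin K) :
    distSupp K H p x = hammingInfDist x (Function.support p) :=
  rfl

lemma trueScore_eq_uniformScore {K H : ℕ} (p : (Fin H → Fin K) → ℝ) (x : Fin H → Fin K)
    (h : Fin H) (a : Fin K) (σ : ℝ) :
    trueScore K H p x h a σ = uniformScore p x (Function.update x h a) σ := by
  simp only [trueScore, qUnif, uniformScore, uniformMarginal, uniformKernel, Fintype.card_fin]

/-- Corollary 2.3 (Coarse score accuracy recovers support-improving edits).
If the learned scores `S_p` are strictly positive and their multiplicative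
distortion `C_σ(x)` (the maximum over `h` and `a ≠ x^h` of
`max(S_p/S_q, S_q/S_p)`) satisfies `σ^{1/2} C_σ(x) → 0` as `σ → 0⁺`, then
for all small `σ`, `S_p(h,a;σ) > σ^{−1/2}` iff the edit `x^{h→a}` is
support-improving. -/
theorem coarse_score_projection
    (K H : ℕ) (hK : 2 ≤ K) (hH : 1 ≤ H)
    (p : (Fin H → Fin K) → ℝ) (hp0 : ∀ v, 0 ≤ p v) (hp1 : ∑ v, p v = 1)
    (x : Fin H → Fin K)
    (Sp : Fin H → Fin K → ℝ → ℝ)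
    (hSp : ∀ (h : Fin H) (a : Fin K), a ≠ x h → ∀ σ ∈ Set.Ioo (0 : ℝ) 1, 0 < Sp h a σ)
    (Cdist : ℝ → ℝ)
    (hC : ∀ σ ∈ Set.Ioo (0 : ℝ) 1,
      IsGreatest {r : ℝ | ∃ (h : Fin H) (a : Fin K), a ≠ x h ∧
        (r = Sp h a σ / trueScore K H p x h a σ ∨
         r = trueScore K H p x h a σ / Sp h a σ)} (Cdist σ))
    (hlim : Tendsto (fun σ : ℝ => σ ^ ((1 : ℝ) / 2) * Cdist σ)
      (nhdsWithin 0 (Set.Ioi 0)) (nhds 0)) :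
    ∃ σ₀ ∈ Set.Ioo (0 : ℝ) 1, ∀ σ ∈ Set.Ioo (0 : ℝ) σ₀,
      ∀ (h : Fin H) (a : Fin K), a ≠ x h →
        (σ ^ (-(1 : ℝ) / 2) < Sp h a σ ↔
          distSupp K H p (Function.update x h a) < distSupp K H p x) := by
  have hD : (Function.support p).Nonempty :=
    Function.support_nonempty_iff.2 (by rintro rfl; simp at hp1)
  have hCo : Cdist =o[𝓝[>] 0] fun σ => σ ^ (-(1 : ℝ) / 2) := by
    simpa only [neg_div] using isLittleO_rpow_neg_of_tendsto hlim
  have hCo_inv : (fun σ => Cdist σ * σ ^ (-(1 : ℝ) / 2)) =o[𝓝[>] 0] fun σ => σ⁻¹ := by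
    simpa only [add_halves, Real.rpow_neg_one] using isLittleO_mul_rpow hCo (-1 / 2)
  have hτ : ∀ᶠ σ : ℝ in 𝓝[>] 0, 0 ≤ σ ^ (-(1 : ℝ) / 2) := by
    filter_upwards [self_mem_nhdsWithin] with σ hσ using Real.rpow_nonneg (le_of_lt hσ) _
  have hunit : ∀ᶠ σ : ℝ in 𝓝[>] 0, σ ∈ Set.Ioo 0 1 := Ioo_mem_nhdsGT one_pos
  obtain ⟨σ₀, hσ₀, hiff⟩ := exists_Ioo_zero_one_of_eventually_nhdsGT <|
    coarse_score_projection_general hp0 hD x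
      (fun e : {e : Fin H × Fin K // e.2 ≠ x e.1} => Function.update x e.1.1 e.1.2)
      (S := fun e => Sp e.1.1 e.1.2) (fun e => hunit.mono (hSp _ _ e.2))
      (fun e => hunit.mono fun σ hσ => by
        simp only [← trueScore_eq_uniformScore]
        exact max_le ((hC σ hσ).2 ⟨_, _, e.2, .inl rfl⟩) ((hC σ hσ).2 ⟨_, _, e.2, .inr rfl⟩))
      hτ hCo hCo_inv
  exact ⟨σ₀, hσ₀, fun σ hσ h a ha => by
    simpa only [distSupp_eq_hammingInfDist] using hiff σ hσ ⟨(h, a), ha⟩⟩
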